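/- Let s₀ > d be an integer and ρ ≥ 0. If a, b ∈ H^{ρ+s₀}(𝕋^d;ℂ) are functions (symbols independent of ξ), then for any s ∈ ℝ and any h ∈ H^s(𝕋^d;ℂ): ‖(T_a T_b − T_{ab})h‖_{H^{s+ρ}} ≤ C ‖a‖_{H^{ρ+s₀}} ‖b‖_{H^{ρ+s₀}} ‖h‖_{H^s}. -/

import Mathlib

open MeasureTheory Complex Real Filter

noncomputable section

namespace QLNLS

/-- Points of `ℝ^d` (resp. the torus `𝕋^d = (ℝ/2πℤ)^d`, via `2π`-periodic functions). -/
abbrev Vec (d : ℕ) := Fin d → ℝ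
/-- Frequency lattice `ℤ^d`. -/
abbrev Zd (d : ℕ) := Fin d → ℤ
/-- Functions on the torus. -/
abbrev Fn (d : ℕ) := Vec d → ℂ
/-- Sequences of Fourier coefficients. -/
abbrev Seq (d : ℕ) := Zd d → ℂ
/-- Symbols `a(x, ξ)`. -/
abbrev Sym (d : ℕ) := Vec d → Vec d → ℂ

variable {d : ℕ}

/-- Euclidean norm `|ξ|`. -/
def rnorm (ξ : Vec d) : ℝ := Real.sqrt (∑ i, (ξ i) ^ 2)

/-- Euclidean norm `|n|` of a lattice point. -/
def znorm (n : Zd d) : ℝ := Real.sqrt (∑ i, ((n i : ℝ)) ^ 2)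

/-- Japanese bracket `⟨n⟩ = (1+|n|²)^{1/2}`. -/
def jb (n : Zd d) : ℝ := Real.sqrt (1 + ∑ i, ((n i : ℝ)) ^ 2)

/-- Japanese bracket `⟨ξ⟩` for real frequencies. -/
def jbR (ξ : Vec d) : ℝ := Real.sqrt (1 + ∑ i, (ξ i) ^ 2)

/-- `2π`-periodicity in every coordinate. -/
def Periodic2pi (u : Fn d) : Prop :=
  ∀ (x : Vec d) (n : Zd d), u (fun i => x i + 2 * π * (n i : ℝ)) = u x

/-- A fundamental domain of the torus. -/
def box (d : ℕ) : Set (Vec d) := Set.univ.pi fun _ : Fin d => Set.Ioc (0 : ℝ) (2 * π)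

/-- Fourier coefficient `û(n) = (2π)^{-d/2} ∫ u(x) e^{-i n·x} dx`. -/
def fCoeff (u : Fn d) (n : Zd d) : ℂ :=
  (((2 * π : ℝ) ^ (-(d : ℝ) / 2) : ℝ) : ℂ) *
    ∫ x in box d, u x * Complex.exp (-Complex.I * ((∑ i, (n i : ℝ) * x i : ℝ) : ℂ))

/-- Squared Sobolev norm of a coefficient sequence. -/
def hsNormSq (s : ℝ) (c : Seq d) : ℝ := ∑' n : Zd d, jb n ^ (2 * s) * ‖c n‖ ^ 2

/-- Sobolev norm of a coefficient sequence. -/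
def hsNorm (s : ℝ) (c : Seq d) : ℝ := Real.sqrt (hsNormSq s c)

/-- Membership of a coefficient sequence in `H^s`. -/
def InHsSeq (s : ℝ) (c : Seq d) : Prop :=
  Summable fun n : Zd d => jb n ^ (2 * s) * ‖c n‖ ^ 2

/-- `H^s` norm of a function on the torus. -/
def sobNorm (s : ℝ) (u : Fn d) : ℝ := hsNorm s (fCoeff u)

/-- `u ∈ H^s(𝕋^d;ℂ)`: `u` is `2π`-periodic, its Fourier coefficients are `H^s`-summable,
and `u` is represented by its Fourier series. -/
def InHs (s : ℝ) (u : Fn d) : Prop :=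
  Periodic2pi u ∧ InHsSeq s (fCoeff u) ∧
    ∀ x : Vec d, HasSum
      (fun n : Zd d => (((2 * π : ℝ) ^ (-(d : ℝ) / 2) : ℝ) : ℂ) * fCoeff u n *
        Complex.exp (Complex.I * ((∑ i, (n i : ℝ) * x i : ℝ) : ℂ))) (u x)

/-- Partial derivative `∂_{x_i}` of a function. -/
def pdF (i : Fin d) (u : Fn d) : Fn d := fun x => fderiv ℝ u x (Pi.single i 1)

/-- Partial derivative `∂_{x_i}` of a symbol. -/
def pdx (i : Fin d) (a : Sym d) : Sym d := fun x ξ => fderiv ℝ (fun y => a y ξ) x (Pi.single i 1)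

/-- Partial derivative `∂_{ξ_i}` of a symbol. -/
def pdxi (i : Fin d) (a : Sym d) : Sym d := fun x ξ => fderiv ℝ (fun η => a x η) ξ (Pi.single i 1)

/-- Iterated mixed partial derivative of a symbol along a list of directions
(`Sum.inl j` = `∂_{x_j}`, `Sum.inr j` = `∂_{ξ_j}`). -/
def mderiv (L : List (Fin d ⊕ Fin d)) (a : Sym d) : Sym d :=
  L.foldr (fun i b => match i with | Sum.inl j => pdx j b | Sum.inr j => pdxi j b) a

/-- Number of `ξ`-derivatives in a list of directions. -/
def nXi (L : List (Fin d ⊕ Fin d)) : ℕ := (L.filter fun i => i.isRight).length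

/-- The set of values whose supremum is the symbol seminorm `|a|_{𝒩^m_s}`. -/
def symVals (m : ℝ) (s : ℕ) (a : Sym d) : Set ℝ :=
  { r | ∃ (L : List (Fin d ⊕ Fin d)) (x ξ : Vec d), L.length ≤ s ∧
        r = jbR ξ ^ (-m + (nXi L : ℝ)) * ‖mderiv L a x ξ‖ }

/-- Symbol seminorm `|a|_{𝒩^m_s}`. -/
def symNorm (m : ℝ) (s : ℕ) (a : Sym d) : ℝ := sSup (symVals m s a)

/-- Membership in the symbol class `𝒩^m_s`. -/
def InSymClass (m : ℝ) (s : ℕ) (a : Sym d) : Prop :=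
  ContDiff ℝ (s : ℕ∞) (Function.uncurry a) ∧ (∀ ξ, Periodic2pi fun x => a x ξ) ∧
    BddAbove (symVals m s a)

/-- Poisson bracket `{a,b}`. -/
def poisson (a b : Sym d) : Sym d := fun x ξ =>
  ∑ j, (pdxi j a x ξ * pdx j b x ξ - pdx j a x ξ * pdxi j b x ξ)

/-- The second-order bracket `σ(a,b)`. -/
def sigmaB (a b : Sym d) : Sym d := fun x ξ =>
  ∑ j, ∑ k,
    (pdxi j (pdxi k a) x ξ * pdx j (pdx k b) x ξ
      - 2 * pdx j (pdxi k a) x ξ * pdxi j (pdx k b) x ξ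
      + pdx j (pdx k a) x ξ * pdxi j (pdxi k b) x ξ)

/-- An admissible cut-off function `χ`. -/
structure IsCutoff (χ : ℝ → ℝ) : Prop where
  smooth : ContDiff ℝ (⊤ : ℕ∞) χ
  mem : ∀ t : ℝ, χ t ∈ Set.Icc (0 : ℝ) 1
  eq_one : ∀ t : ℝ, |t| ≤ 5 / 4 → χ t = 1
  eq_zero : ∀ t : ℝ, 8 / 5 ≤ |t| → χ t = 0

/-- `x`-Fourier coefficient `â(η, ξ)` of a symbol. -/
def symCoeff (a : Sym d) (η : Zd d) (ξ : Vec d) : ℂ := fCoeff (fun x => a x ξ) η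

/-- Midpoint `(j+k)/2` of two lattice points. -/
def mid (j k : Zd d) : Vec d := fun i => ((j i + k i : ℤ) : ℝ) / 2

/-- The paradifferential cut-off factor `χ_ε(|j-k|/⟨j+k⟩) = χ(|j-k|/(ε⟨j+k⟩))`. -/
def cutFactor (χ : ℝ → ℝ) (ε : ℝ) (j k : Zd d) : ℝ :=
  χ (znorm (j - k) / (ε * jb (j + k)))

/-- The Weyl paradifferential operator `T_a`, acting on Fourier coefficient sequences:
`(T_a h)^(j) = (2π)^{-d/2} Σ_k χ_ε(|j-k|/⟨j+k⟩) â(j-k,(j+k)/2) ĥ(k)`. -/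
def paraC (χ : ℝ → ℝ) (ε : ℝ) (a : Sym d) (c : Seq d) : Seq d := fun j =>
  (((2 * π : ℝ) ^ (-(d : ℝ) / 2) : ℝ) : ℂ) *
    ∑' k : Zd d, ((cutFactor χ ε j k : ℝ) : ℂ) * symCoeff a (j - k) (mid j k) * c k

/-- The operator `R_a` built from the difference of two cut-offs. -/
def remC (χ : ℝ → ℝ) (ε₁ ε₂ : ℝ) (a : Sym d) (c : Seq d) : Seq d := fun j =>
  (((2 * π : ℝ) ^ (-(d : ℝ) / 2) : ℝ) : ℂ) *
    ∑' k : Zd d, ((cutFactor χ ε₁ j k - cutFactor χ ε₂ j k : ℝ) : ℂ) *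
      symCoeff a (j - k) (mid j k) * c k

/-- Wirtinger derivative `∂_{y_j} = (∂_{Re y_j} - i ∂_{Im y_j})/2`. -/
def wdP {n : ℕ} (j : Fin n) (G : (Fin n → ℂ) → ℂ) : (Fin n → ℂ) → ℂ := fun y =>
  (fderiv ℝ G y (Pi.single j 1) - Complex.I * fderiv ℝ G y (Pi.single j Complex.I)) / 2

/-- Wirtinger derivative `∂_{ȳ_j} = (∂_{Re y_j} + i ∂_{Im y_j})/2`. -/
def wdM {n : ℕ} (j : Fin n) (G : (Fin n → ℂ) → ℂ) : (Fin n → ℂ) → ℂ := fun y =>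
  (fderiv ℝ G y (Pi.single j 1) + Complex.I * fderiv ℝ G y (Pi.single j Complex.I)) / 2

/-- The 1-jet `(u, ∇u)` of a function, as a point of `ℂ^{d+1}`. -/
def jet (u : Fn d) (x : Vec d) : Fin (d + 1) → ℂ :=
  Fin.cons (u x) fun j => pdF j u x

/-- The Hamiltonian nonlinearity
`P(u) = (∂_{ū}F)(u,∇u) - Σ_j ∂_{x_j}((∂_{ū_{x_j}}F)(u,∇u))`. -/
def Pop (F : (Fin (d + 1) → ℂ) → ℂ) (u : Fn d) : Fn d := fun x =>
  wdM 0 F (jet u x) - ∑ j, pdF j (fun y => wdM (Fin.succ j) F (jet u y)) x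

/-- `F ∈ C^∞(ℂ^{d+1};ℝ)` in the real sense, with a zero of order at least 3 at the origin. -/
def GoodF (d : ℕ) (F : (Fin (d + 1) → ℂ) → ℂ) : Prop :=
  ContDiff ℝ (⊤ : ℕ∞) F ∧ (∀ y, (F y).im = 0) ∧ ∀ k : ℕ, k ≤ 2 → iteratedFDeriv ℝ k F 0 = 0

/-- Global ellipticity (Hypothesis 1.1). -/
def Elliptic (d : ℕ) (F : (Fin (d + 1) → ℂ) → ℂ) : Prop :=
  ∃ c₁ > (0 : ℝ), ∃ c₂ > (0 : ℝ), ∀ (ξ : Vec d) (y : Fin (d + 1) → ℂ),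
    (c₁ * ∑ i, (ξ i) ^ 2 ≤
      (∑ j, ∑ k, ((ξ j * ξ k : ℝ) : ℂ) *
        ((if j = k then 1 else 0) + wdP (Fin.succ j) (wdM (Fin.succ k) F) y)).re) ∧
    (ξ ≠ 0 → c₂ ≤
      (1 + (∑ j, ∑ k, ((ξ j * ξ k : ℝ) : ℂ) * wdP (Fin.succ j) (wdM (Fin.succ k) F) y).re
            / ∑ i, (ξ i) ^ 2) ^ 2
        - ‖∑ j, ∑ k, ((ξ j * ξ k : ℝ) : ℂ) * wdM (Fin.succ j) (wdM (Fin.succ k) F) y‖ ^ 2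
            / (∑ i, (ξ i) ^ 2) ^ 2)

/-- The symbol `a₂(x,ξ) = Σ_{j,k} (∂_{ū_{x_k}}∂_{u_{x_j}}F)(u,∇u) ξ_j ξ_k`. -/
def a2sym (F : (Fin (d + 1) → ℂ) → ℂ) (u : Fn d) : Sym d := fun x ξ =>
  ∑ j, ∑ k, ((ξ j * ξ k : ℝ) : ℂ) * wdP (Fin.succ j) (wdM (Fin.succ k) F) (jet u x)

/-- The symbol `b₂(x,ξ) = Σ_{j,k} (∂_{ū_{x_k}}∂_{ū_{x_j}}F)(u,∇u) ξ_j ξ_k`. -/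
def b2sym (F : (Fin (d + 1) → ℂ) → ℂ) (u : Fn d) : Sym d := fun x ξ =>
  ∑ j, ∑ k, ((ξ j * ξ k : ℝ) : ℂ) * wdM (Fin.succ j) (wdM (Fin.succ k) F) (jet u x)

/-- The symbol `a₁(x,ξ) = (i/2) Σ_j ((∂_{ū}∂_{u_{x_j}}F) - (∂_u∂_{ū_{x_j}}F))(u,∇u) ξ_j`. -/
def a1sym (F : (Fin (d + 1) → ℂ) → ℂ) (u : Fn d) : Sym d := fun x ξ =>
  Complex.I / 2 * ∑ j, ((ξ j : ℝ) : ℂ) *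
    (wdM 0 (wdP (Fin.succ j) F) (jet u x) - wdP 0 (wdM (Fin.succ j) F) (jet u x))

/-- Conjugation of a coefficient sequence: the sequence of `conj u`. -/
def starSeq (c : Seq d) : Seq d := fun n => (starRingEnd ℂ) (c (-n))

/-- Pointwise conjugate of a function. -/
def starF (u : Fn d) : Fn d := fun x => (starRingEnd ℂ) (u x)

/-- Pointwise conjugate of a symbol. -/
def starSym (a : Sym d) : Sym d := fun x ξ => (starRingEnd ℂ) (a x ξ)

/-- The symbol `(x,ξ) ↦ conj (a(x,-ξ))`. -/
def flipSym (a : Sym d) : Sym d := fun x ξ => (starRingEnd ℂ) (a x (-ξ))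

/-- The matrix `E = diag(1,-1)` as a sign vector. -/
def Em : Fin 2 → ℂ := ![1, -1]

/-- `Op^BW` of a 2×2 matrix of symbols, acting on vectors of coefficient sequences. -/
def opBWmat (χ : ℝ → ℝ) (ε : ℝ) (A : Fin 2 → Fin 2 → Sym d) (C : Fin 2 → Seq d) :
    Fin 2 → Seq d := fun σ j => ∑ τ, paraC χ ε (A σ τ) (C τ) j

/-- The symbol `|ξ|²`. -/
def sq2sym (d : ℕ) : Sym d := fun _ ξ => (((rnorm ξ) ^ 2 : ℝ) : ℂ)

/-- The matrix of symbols `A₂(x,ξ)`. -/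
def A2mat (F : (Fin (d + 1) → ℂ) → ℂ) (u : Fn d) : Fin 2 → Fin 2 → Sym d :=
  ![![a2sym F u, b2sym F u], ![flipSym (b2sym F u), a2sym F u]]

/-- The matrix of symbols `A₁(x,ξ)`. -/
def A1mat (F : (Fin (d + 1) → ℂ) → ℂ) (u : Fn d) : Fin 2 → Fin 2 → Sym d :=
  ![![a1sym F u, 0], ![0, flipSym (a1sym F u)]]

/-- The full matrix of symbols `|ξ|²𝟙 + A₂(x,ξ) + A₁(x,ξ)`. -/
def sysSym (F : (Fin (d + 1) → ℂ) → ℂ) (u : Fn d) : Fin 2 → Fin 2 → Sym d := fun σ τ =>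
  fun x ξ => (if σ = τ then sq2sym d x ξ else 0) + A2mat F u σ τ x ξ + A1mat F u σ τ x ξ

/-- `H^s` norm of a vector of coefficient sequences. -/
def hsNormVec (s : ℝ) (C : Fin 2 → Seq d) : ℝ := hsNorm s (C 0) + hsNorm s (C 1)

/-- Membership of a vector of coefficient sequences in `H^s`. -/
def InHsVec (s : ℝ) (C : Fin 2 → Seq d) : Prop := InHsSeq s (C 0) ∧ InHsSeq s (C 1)

/-- The `L²` pairing `(U,V) = ∫ (u v̄ + ū v)`, at the level of Fourier coefficients. -/
def pairL2 (C E : Fin 2 → Seq d) : ℂ :=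
  ∑' n : Zd d, (C 0 n * (starRingEnd ℂ) (E 0 n) + C 1 n * (starRingEnd ℂ) (E 1 n))

/-- The scalar `L²` pairing, at the level of Fourier coefficients. -/
def pairS (c e : Seq d) : ℂ := ∑' n : Zd d, c n * (starRingEnd ℂ) (e n)

/-- A matrix of operators is real-to-real: it preserves the subspace `𝒰 = {(u, ū)}`. -/
def PreservesReality (M : (Fin 2 → Seq d) → (Fin 2 → Seq d)) : Prop :=
  ∀ c : Seq d, M ![c, starSeq c] 1 = starSeq (M ![c, starSeq c] 0)

/-- The coefficient vector of `(v(t), conj v(t))`. -/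
def Vvec (v : ℝ → Fn d) (t : ℝ) : Fin 2 → Seq d :=
  ![fCoeff (v t), starSeq (fCoeff (v t))]

/-- `V = (v, v̄)` solves `V̇ = iE Op^BW(|ξ|²𝟙 + A₂ + A₁)V` on `[0,T)`. -/
def SolvesLin (χ : ℝ → ℝ) (ε : ℝ) (F : (Fin (d + 1) → ℂ) → ℂ) (T : ℝ)
    (u v : ℝ → Fn d) : Prop :=
  ∀ᵐ t ∂(volume.restrict (Set.Ico (0 : ℝ) T)), ∀ (σ : Fin 2) (n : Zd d),
    HasDerivAt (fun τ => Vvec v τ σ n)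
      (Complex.I * Em σ * opBWmat χ ε (sysSym F (u t)) (Vvec v t) σ n) t

/-- The regularity hypothesis (4.1):
`u ∈ L^∞([0,T);H^s) ∩ Lip([0,T);H^{s-2})`, with
`sup_t ‖u(t)‖_{H^{2s₀+7}} ≤ r` and `‖∂_t u‖_{H^{2s₀+5}} ≤ r` (as a Lipschitz bound). -/
def RegHyp (s₀ : ℕ) (s T r : ℝ) (u : ℝ → Fn d) : Prop :=
  (∀ t ∈ Set.Ico (0 : ℝ) T, InHs s (u t)) ∧
  (∃ M : ℝ, ∀ t ∈ Set.Ico (0 : ℝ) T, sobNorm s (u t) ≤ M) ∧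
  (∃ L : ℝ, ∀ t₁ ∈ Set.Ico (0 : ℝ) T, ∀ t₂ ∈ Set.Ico (0 : ℝ) T,
    sobNorm (s - 2) (u t₁ - u t₂) ≤ L * |t₁ - t₂|) ∧
  (∀ t ∈ Set.Ico (0 : ℝ) T, sobNorm (2 * (s₀ : ℝ) + 7) (u t) ≤ r) ∧
  (∀ t₁ ∈ Set.Ico (0 : ℝ) T, ∀ t₂ ∈ Set.Ico (0 : ℝ) T,
    sobNorm (2 * (s₀ : ℝ) + 5) (u t₁ - u t₂) ≤ r * |t₁ - t₂|)

/-- `v ∈ L^∞([0,T);H^s) ∩ Lip([0,T);H^{s-2})`. -/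
def RegSol (s T : ℝ) (v : ℝ → Fn d) : Prop :=
  (∀ t ∈ Set.Ico (0 : ℝ) T, InHs s (v t)) ∧
  (∃ M : ℝ, ∀ t ∈ Set.Ico (0 : ℝ) T, sobNorm s (v t) ≤ M) ∧
  (∃ L : ℝ, ∀ t₁ ∈ Set.Ico (0 : ℝ) T, ∀ t₂ ∈ Set.Ico (0 : ℝ) T,
    sobNorm (s - 2) (v t₁ - v t₂) ≤ L * |t₁ - t₂|)

/-- The high-frequency cut-off `𝒳_R(ξ) = 1 - χ(|ξ|/R)`. -/
def cutXR (χ : ℝ → ℝ) (R : ℝ) (ξ : Vec d) : ℝ := 1 - χ (rnorm ξ / R)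

/-- `ã_{2,R}(x,ξ) = |ξ|^{-2} a₂(x,ξ) 𝒳_R(ξ)`. -/
def a2til (F : (Fin (d + 1) → ℂ) → ℂ) (u : Fn d) (χ : ℝ → ℝ) (R : ℝ) : Sym d := fun x ξ =>
  ((((rnorm ξ) ^ 2)⁻¹ * cutXR χ R ξ : ℝ) : ℂ) * a2sym F u x ξ

/-- `b̃_{2,R}(x,ξ) = |ξ|^{-2} b₂(x,ξ) 𝒳_R(ξ)`. -/
def b2til (F : (Fin (d + 1) → ℂ) → ℂ) (u : Fn d) (χ : ℝ → ℝ) (R : ℝ) : Sym d := fun x ξ =>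
  ((((rnorm ξ) ^ 2)⁻¹ * cutXR χ R ξ : ℝ) : ℂ) * b2sym F u x ξ

/-- `λ₂ = ((1+ã_{2,R})² - |b̃_{2,R}|²)^{1/2}`. -/
def lam2 (F : (Fin (d + 1) → ℂ) → ℂ) (u : Fn d) (χ : ℝ → ℝ) (R : ℝ) :
    Vec d → Vec d → ℝ := fun x ξ =>
  Real.sqrt ((1 + (a2til F u χ R x ξ).re) ^ 2 - ‖b2til F u χ R x ξ‖ ^ 2)

/-- The normalizing denominator `(2λ₂(1+ã_{2,R}+λ₂))^{1/2}`. -/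
def sden (F : (Fin (d + 1) → ℂ) → ℂ) (u : Fn d) (χ : ℝ → ℝ) (R : ℝ) :
    Vec d → Vec d → ℝ := fun x ξ =>
  Real.sqrt (2 * lam2 F u χ R x ξ * (1 + (a2til F u χ R x ξ).re + lam2 F u χ R x ξ))

/-- The symbol `s₁`. -/
def s1sym (F : (Fin (d + 1) → ℂ) → ℂ) (u : Fn d) (χ : ℝ → ℝ) (R : ℝ) : Sym d := fun x ξ =>
  (((1 + (a2til F u χ R x ξ).re + lam2 F u χ R x ξ) / sden F u χ R x ξ : ℝ) : ℂ)

/-- The symbol `s₂`. -/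
def s2sym (F : (Fin (d + 1) → ℂ) → ℂ) (u : Fn d) (χ : ℝ → ℝ) (R : ℝ) : Sym d := fun x ξ =>
  -b2til F u χ R x ξ / ((sden F u χ R x ξ : ℝ) : ℂ)

/-- `ã⁺_{2,R} = λ₂ - 1`. -/
def a2plus (F : (Fin (d + 1) → ℂ) → ℂ) (u : Fn d) (χ : ℝ → ℝ) (R : ℝ) : Sym d := fun x ξ =>
  ((lam2 F u χ R x ξ - 1 : ℝ) : ℂ)

/-- The diagonalized second-order symbol `a₂^{(1)}(x,ξ) = |ξ|² ã⁺_{2,R}(x,ξ)`. -/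
def a2one (F : (Fin (d + 1) → ℂ) → ℂ) (u : Fn d) (χ : ℝ → ℝ) (R : ℝ) : Sym d := fun x ξ =>
  (((rnorm ξ) ^ 2 * (lam2 F u χ R x ξ - 1) : ℝ) : ℂ)

/-- The real scalar symbol `ℒ(x,ξ) = |ξ|² + a₂^{(1)}(x,ξ)`. -/
def Lscal (F : (Fin (d + 1) → ℂ) → ℂ) (u : Fn d) (χ : ℝ → ℝ) (R : ℝ) :
    Vec d → Vec d → ℝ := fun x ξ =>
  (rnorm ξ) ^ 2 + (rnorm ξ) ^ 2 * (lam2 F u χ R x ξ - 1)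

/-- The matrix `S(x,ξ)`. -/
def Smat (F : (Fin (d + 1) → ℂ) → ℂ) (u : Fn d) (χ : ℝ → ℝ) (R : ℝ) (x ξ : Vec d) :
    Matrix (Fin 2) (Fin 2) ℂ :=
  !![s1sym F u χ R x ξ, s2sym F u χ R x ξ;
     (starRingEnd ℂ) (s2sym F u χ R x ξ), s1sym F u χ R x ξ]

/-- The matrix `S^{-1}(x,ξ)`. -/
def SmatInv (F : (Fin (d + 1) → ℂ) → ℂ) (u : Fn d) (χ : ℝ → ℝ) (R : ℝ) (x ξ : Vec d) :
    Matrix (Fin 2) (Fin 2) ℂ :=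
  !![s1sym F u χ R x ξ, -s2sym F u χ R x ξ;
     -(starRingEnd ℂ) (s2sym F u χ R x ξ), s1sym F u χ R x ξ]

/-- The matrix `Ã_{2,R}(x,ξ)`. -/
def A2tilMat (F : (Fin (d + 1) → ℂ) → ℂ) (u : Fn d) (χ : ℝ → ℝ) (R : ℝ) (x ξ : Vec d) :
    Matrix (Fin 2) (Fin 2) ℂ :=
  !![a2til F u χ R x ξ, b2til F u χ R x ξ;
     (starRingEnd ℂ) (b2til F u χ R x (-ξ)), a2til F u χ R x ξ]

/-- The matrix `E = diag(1,-1)`. -/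
def EmatM : Matrix (Fin 2) (Fin 2) ℂ := !![1, 0; 0, -1]

/-- The matrix of symbols `S^{-1}(x,ξ)`. -/
def SinvMatSym (F : (Fin (d + 1) → ℂ) → ℂ) (u : Fn d) (χ : ℝ → ℝ) (R : ℝ) :
    Fin 2 → Fin 2 → Sym d :=
  ![![s1sym F u χ R, fun x ξ => -s2sym F u χ R x ξ],
    ![fun x ξ => -(starRingEnd ℂ) (s2sym F u χ R x ξ), s1sym F u χ R]]

/-- The entry `s₁^{(1)}` of the matrix `S₁`. -/
def s1_1 (F : (Fin (d + 1) → ℂ) → ℂ) (u : Fn d) (χ : ℝ → ℝ) (R : ℝ) : Sym d := fun x ξ =>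
  1 / (2 * Complex.I) *
    (poisson (s2sym F u χ R) (starSym (s2sym F u χ R)) x ξ * s1sym F u χ R x ξ
      + 2 * poisson (s1sym F u χ R) (s2sym F u χ R) x ξ *
          (starRingEnd ℂ) (s2sym F u χ R x ξ))

/-- The entry `s₂^{(1)}` of the matrix `S₁`. -/
def s2_1 (F : (Fin (d + 1) → ℂ) → ℂ) (u : Fn d) (χ : ℝ → ℝ) (R : ℝ) : Sym d := fun x ξ =>
  1 / (2 * Complex.I) *
    (poisson (s2sym F u χ R) (starSym (s2sym F u χ R)) x ξ * s2sym F u χ R x ξ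
      + 2 * poisson (s1sym F u χ R) (s2sym F u χ R) x ξ * s1sym F u χ R x ξ)

/-- The matrix `S₁(x,ξ)`. -/
def S1mat (F : (Fin (d + 1) → ℂ) → ℂ) (u : Fn d) (χ : ℝ → ℝ) (R : ℝ) (x ξ : Vec d) :
    Matrix (Fin 2) (Fin 2) ℂ :=
  (1 / (2 * Complex.I)) •
    (!![poisson (s2sym F u χ R) (starSym (s2sym F u χ R)) x ξ,
          2 * poisson (s1sym F u χ R) (s2sym F u χ R) x ξ;
        -2 * poisson (s1sym F u χ R) (starSym (s2sym F u χ R)) x (-ξ),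
          poisson (s2sym F u χ R) (starSym (s2sym F u χ R)) x (-ξ)] *
      Smat F u χ R x ξ)

/-- The symbol `g₁`. -/
def g1sym (F : (Fin (d + 1) → ℂ) → ℂ) (u : Fn d) (χ : ℝ → ℝ) (R : ℝ) : Sym d := fun x ξ =>
  1 / (2 * Complex.I) * poisson (s1_1 F u χ R) (s1sym F u χ R) x ξ
    - 1 / (2 * Complex.I) * poisson (s2_1 F u χ R) (starSym (s2sym F u χ R)) x ξ
    + 1 / 8 * sigmaB (s2sym F u χ R) (starSym (s2sym F u χ R)) x ξ

/-- The symbol `g₂`. -/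
def g2sym (F : (Fin (d + 1) → ℂ) → ℂ) (u : Fn d) (χ : ℝ → ℝ) (R : ℝ) : Sym d := fun x ξ =>
  -(1 / (2 * Complex.I)) * poisson (s1_1 F u χ R) (s2sym F u χ R) x ξ
    + 1 / (2 * Complex.I) * poisson (s2_1 F u χ R) (s1sym F u χ R) x ξ

/-- The derivative operator `∂_{x_i}` at the level of Fourier coefficients. -/
def dOp (i : Fin d) (c : Seq d) : Seq d := fun n => Complex.I * ((n i : ℝ) : ℂ) * c n

/-- A positive constant depending monotonically on a size parameter
(hence bounded from above as the parameter goes to zero). -/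
def GoodConst (C : ℝ → ℝ) : Prop := Monotone C ∧ ∀ x : ℝ, 0 < C x

/-! Both `T_a T_b` and `T_{ab}` act on Fourier coefficients by
`c ↦ (2π)^{-d} ∑_{l,k} m(j,l,k) â(j-l) b̂(l-k) c(k)`, with `m = ψ(j,l) ψ(l,k)` for the composition
and `m = ψ(j,k)` for the product, `ψ` being the cut-off factor. Wherever `ψ(j,k) ≠ 0` the
frequencies `j` and `k` are comparable, so the difference of the two multipliers preserves `H^s`.
Moreover that difference vanishes unless one of the three cut-off factors leaves its plateau, in
which case `|j-l|` or `|l-k|` is of the order of `⟨j⟩`, that is `⟨j⟩ ≲ ⟨j-l⟩⟨l-k⟩`: the gain of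
`ρ` derivatives is paid for by the coefficients of `a` and `b`. What remains is a double
convolution, bounded on `ℓ²` by the weighted `ℓ¹` norms of `â` and `b̂`, and these are controlled
by the `H^{ρ+s₀}` norms through the Cauchy–Schwarz inequality.
-/

section SeriesInequalities

theorem summable_mul_and_tsum_mul_le_sqrt {ι : Type*} {f g : ι → ℝ} (hf₀ : 0 ≤ f) (hg₀ : 0 ≤ g)
    (hf : Summable fun i => f i ^ 2) (hg : Summable fun i => g i ^ 2) :
    (Summable fun i => f i * g i) ∧
      ∑' i, f i * g i ≤ √(∑' i, f i ^ 2) * √(∑' i, g i ^ 2) := by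
  simpa only [Real.rpow_two, ← Real.sqrt_eq_rpow] using
    Real.summable_and_inner_le_Lp_mul_Lq_tsum_of_nonneg Real.HolderConjugate.two_two hf₀ hg₀
      (by simpa only [Real.rpow_two] using hf) (by simpa only [Real.rpow_two] using hg)

theorem summable_mul_and_sq_tsum_mul_le {ι : Type*} {w g : ι → ℝ} (hw₀ : 0 ≤ w) (hg₀ : 0 ≤ g)
    (hw : Summable w) (hwg : Summable fun i => w i * g i ^ 2) :
    (Summable fun i => w i * g i) ∧
      (∑' i, w i * g i) ^ 2 ≤ (∑' i, w i) * ∑' i, w i * g i ^ 2 := by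
  have sq_sqrt_w : ∀ i, √(w i) ^ 2 = w i := fun i => Real.sq_sqrt (hw₀ i)
  have sq_sqrt_w_mul : ∀ i, (√(w i) * g i) ^ 2 = w i * g i ^ 2 := fun i => by
    rw [mul_pow, sq_sqrt_w]
  have sqrt_w_mul : ∀ i, √(w i) * (√(w i) * g i) = w i * g i := fun i => by
    rw [← mul_assoc, ← sq, sq_sqrt_w]
  obtain ⟨hsum, hle⟩ := summable_mul_and_tsum_mul_le_sqrt
    (f := fun i => √(w i)) (g := fun i => √(w i) * g i)
    (fun i => Real.sqrt_nonneg _) (fun i => mul_nonneg (Real.sqrt_nonneg _) (hg₀ i))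
    (by simpa only [sq_sqrt_w] using hw) (by simpa only [sq_sqrt_w_mul] using hwg)
  simp only [sq_sqrt_w, sq_sqrt_w_mul, sqrt_w_mul] at hsum hle
  refine ⟨hsum, ?_⟩
  calc (∑' i, w i * g i) ^ 2
      ≤ (√(∑' i, w i) * √(∑' i, w i * g i ^ 2)) ^ 2 :=
        pow_le_pow_left₀ (tsum_nonneg fun i => mul_nonneg (hw₀ i) (hg₀ i)) hle 2
    _ = (∑' i, w i) * ∑' i, w i * g i ^ 2 := by
        rw [mul_pow, Real.sq_sqrt (tsum_nonneg hw₀),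
          Real.sq_sqrt (tsum_nonneg fun i => mul_nonneg (hw₀ i) (sq_nonneg _))]

end SeriesInequalities

section Convolution

variable {G : Type*} [AddGroup G] {f g h : G → ℝ}

/-- Discrete convolution `(f ∗ g)(j) = ∑_l f(j-l) g(l)` of real functions on an additive group.
It is meaningful only where the series converges. -/
def conv (f g : G → ℝ) (j : G) : ℝ := ∑' l, f (j - l) * g l

theorem conv_nonneg (hf₀ : 0 ≤ f) (hg₀ : 0 ≤ g) : 0 ≤ conv f g :=
  fun j => tsum_nonneg fun l => mul_nonneg (hf₀ (j - l)) (hg₀ l)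

theorem summable_comp_sub_left (hf : Summable f) (j : G) : Summable fun l => f (j - l) :=
  (Equiv.subLeft j).summable_iff.2 hf

theorem summable_prod_sub_mul (hf₀ : 0 ≤ f) (hg₀ : 0 ≤ g) (hf : Summable f) (hg : Summable g) :
    Summable fun q : G × G => f (q.1 - q.2) * g q.2 :=
  (((Equiv.prodShear (.refl G) .subRight).summable_iff (f := fun q : G × G => g q.1 * f q.2)).2
    (hg.mul_of_nonneg hf hg₀ hf₀)).prod_symm.congr fun _ => mul_comm _ _

theorem tsum_conv (hf₀ : 0 ≤ f) (hg₀ : 0 ≤ g) (hf : Summable f) (hg : Summable g) :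
    ∑' j, conv f g j = (∑' j, f j) * ∑' j, g j := by
  have hfg := summable_prod_sub_mul hf₀ hg₀ hf hg
  calc ∑' j, conv f g j = ∑' (l) (j), f (j - l) * g l := hfg.tsum_comm.symm
    _ = ∑' l, (∑' j, f j) * g l := tsum_congr fun l => by
        rw [tsum_mul_right]
        exact congrArg (· * g l) ((Equiv.subRight l).tsum_eq f)
    _ = (∑' j, f j) * ∑' j, g j := tsum_mul_left

theorem summable_conv_and_sq_conv_le (hf₀ : 0 ≤ f) (hg₀ : 0 ≤ g) (hf : Summable f)
    (hg : Summable fun l => g l ^ 2) (j : G) :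
    (Summable fun l => f (j - l) * g l) ∧
      conv f g j ^ 2 ≤ (∑' l, f l) * conv f (fun l => g l ^ 2) j := by
  rw [← (Equiv.subLeft j).tsum_eq f]
  exact summable_mul_and_sq_tsum_mul_le (fun l => hf₀ (j - l)) hg₀ (summable_comp_sub_left hf j)
    ((summable_prod_sub_mul hf₀ (fun l => sq_nonneg (g l)) hf hg).prod_factor j)

theorem summable_sq_conv (hf₀ : 0 ≤ f) (hg₀ : 0 ≤ g) (hf : Summable f)
    (hg : Summable fun l => g l ^ 2) : Summable fun j => conv f g j ^ 2 :=
  .of_nonneg_of_le (fun _ => sq_nonneg _)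
    (fun j => (summable_conv_and_sq_conv_le hf₀ hg₀ hf hg j).2)
    ((summable_prod_sub_mul hf₀ (fun l => sq_nonneg (g l)) hf hg).prod.mul_left _)

theorem sqrt_tsum_sq_conv_le (hf₀ : 0 ≤ f) (hg₀ : 0 ≤ g) (hf : Summable f)
    (hg : Summable fun l => g l ^ 2) :
    √(∑' j, conv f g j ^ 2) ≤ (∑' j, f j) * √(∑' j, g j ^ 2) := by
  have hg₀' : 0 ≤ fun l => g l ^ 2 := fun l => sq_nonneg (g l)
  have hsq : ∑' j, conv f g j ^ 2 ≤ (∑' j, f j) ^ 2 * ∑' j, g j ^ 2 :=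
    calc ∑' j, conv f g j ^ 2
        ≤ ∑' j, (∑' l, f l) * conv f (fun l => g l ^ 2) j :=
          (summable_sq_conv hf₀ hg₀ hf hg).tsum_le_tsum
            (fun j => (summable_conv_and_sq_conv_le hf₀ hg₀ hf hg j).2)
            ((summable_prod_sub_mul hf₀ hg₀' hf hg).prod.mul_left _)
      _ = (∑' j, f j) ^ 2 * ∑' j, g j ^ 2 := by
          rw [tsum_mul_left, tsum_conv hf₀ hg₀' hf hg, sq, mul_assoc]
  calc √(∑' j, conv f g j ^ 2) ≤ √((∑' j, f j) ^ 2 * ∑' j, g j ^ 2) := Real.sqrt_le_sqrt hsq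
    _ = (∑' j, f j) * √(∑' j, g j ^ 2) := by
        rw [Real.sqrt_mul (sq_nonneg _), Real.sqrt_sq (tsum_nonneg hf₀)]

theorem hasSum_conv_conv (hf₀ : 0 ≤ f) (hg₀ : 0 ≤ g) (hh₀ : 0 ≤ h) (hf : Summable f)
    (hg : Summable g) (hh : Summable fun l => h l ^ 2) (j : G) :
    HasSum (fun p : G × G => f (j - p.1) * (g (p.1 - p.2) * h p.2)) (conv f (conv g h) j) := by
  have inner_sum : ∀ l, ∑' k, f (j - l) * (g (l - k) * h k) = f (j - l) * conv g h l :=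
    fun l => tsum_mul_left
  have hsum : Summable fun p : G × G => f (j - p.1) * (g (p.1 - p.2) * h p.2) := by
    refine (summable_prod_of_nonneg fun p =>
      mul_nonneg (hf₀ _) (mul_nonneg (hg₀ _) (hh₀ _))).2 ⟨fun l => ?_, ?_⟩
    · exact (summable_conv_and_sq_conv_le hg₀ hh₀ hg hh l).1.mul_left (f (j - l))
    · simp only [inner_sum]
      exact (summable_conv_and_sq_conv_le hf₀ (conv_nonneg hg₀ hh₀) hf
        (summable_sq_conv hg₀ hh₀ hg hh) j).1
  rw [hsum.hasSum_iff, hsum.tsum_prod]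
  exact tsum_congr inner_sum

end Convolution

section JapaneseBracket

theorem znorm_eq_norm (n : Zd d) : znorm n = ‖WithLp.toLp 2 fun i => (n i : ℝ)‖ := by
  simp [EuclideanSpace.norm_eq, znorm]

theorem znorm_nonneg (n : Zd d) : 0 ≤ znorm n := Real.sqrt_nonneg _

theorem znorm_add_le (m n : Zd d) : znorm (m + n) ≤ znorm m + znorm n := by
  simp only [znorm_eq_norm]
  refine le_of_eq_of_le ?_ (norm_add_le _ _)
  congr 1
  ext i
  simp

theorem znorm_zero : znorm (0 : Zd d) = 0 := by simp [znorm]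

theorem znorm_sub_comm (m n : Zd d) : znorm (m - n) = znorm (n - m) := by
  simp only [znorm, Pi.sub_apply, Int.cast_sub, sub_sq_comm]

theorem jb_sq (n : Zd d) : jb n ^ 2 = 1 + znorm n ^ 2 := by
  rw [jb, znorm, Real.sq_sqrt (by positivity), Real.sq_sqrt (by positivity)]

theorem jb_nonneg (n : Zd d) : 0 ≤ jb n := Real.sqrt_nonneg _

theorem one_le_jb (n : Zd d) : 1 ≤ jb n :=
  Real.one_le_sqrt.2 (le_add_of_nonneg_right (Finset.sum_nonneg fun _ _ => sq_nonneg _))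

theorem jb_pos (n : Zd d) : 0 < jb n := one_pos.trans_le (one_le_jb n)

theorem jb_rpow_pos (n : Zd d) (s : ℝ) : 0 < jb n ^ s := Real.rpow_pos_of_pos (jb_pos n) s

theorem jb_zero : jb (0 : Zd d) = 1 := by simp [jb]

theorem znorm_le_jb (n : Zd d) : znorm n ≤ jb n :=
  Real.sqrt_le_sqrt (le_add_of_nonneg_left zero_le_one)

theorem jb_add_le (m n : Zd d) : jb (m + n) ≤ jb m + znorm n := by
  refine le_of_sq_le_sq ?_ (add_nonneg (jb_nonneg m) (znorm_nonneg n))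
  calc jb (m + n) ^ 2 ≤ 1 + (znorm m + znorm n) ^ 2 := by
        rw [jb_sq]
        gcongr
        exacts [znorm_nonneg _, znorm_add_le m n]
    _ = jb m ^ 2 + 2 * znorm m * znorm n + znorm n ^ 2 := by rw [jb_sq]; ring
    _ ≤ jb m ^ 2 + 2 * jb m * znorm n + znorm n ^ 2 := by
        have := znorm_nonneg n
        gcongr
        exact znorm_le_jb m
    _ = (jb m + znorm n) ^ 2 := by ring

theorem jb_le_jb_add_znorm_sub (m n : Zd d) : jb m ≤ jb n + znorm (m - n) := by
  simpa only [add_sub_cancel] using jb_add_le n (m - n)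

theorem jb_le_jb_add_self (j : Zd d) : jb j ≤ jb (j + j) := by
  refine Real.sqrt_le_sqrt (add_le_add_right (Finset.sum_le_sum fun i _ => ?_) 1)
  rw [Pi.add_apply, Int.cast_add]
  nlinarith [sq_nonneg (j i : ℝ)]

theorem jb_add_self_le (j : Zd d) : jb (j + j) ≤ 2 * jb j := by
  linarith [jb_add_le j j, znorm_le_jb j]

theorem jb_le_mul_jb_of_znorm_sub_le {θ : ℝ} (hθ : θ < 1) {j k : Zd d}
    (h : znorm (j - k) ≤ θ * jb (j + k)) : jb j ≤ 4 / (1 - θ) * jb k := by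
  have h_near_k : jb (j + k) ≤ 2 * jb k + znorm (j - k) := by
    have := jb_le_jb_add_znorm_sub (j + k) (k + k)
    rw [add_sub_add_right_eq_sub] at this
    linarith [jb_add_self_le k]
  have h_near_j : jb j ≤ jb (j + k) + znorm (j - k) := by
    have := jb_le_jb_add_znorm_sub (j + j) (j + k)
    rw [add_sub_add_left_eq_sub] at this
    linarith [jb_le_jb_add_self j]
  have h_mid : jb j ≤ 2 * jb (j + k) := by
    linarith [mul_le_of_le_one_left (jb_nonneg (j + k)) hθ.le]
  rw [div_mul_eq_mul_div, le_div_iff₀' (sub_pos.2 hθ)]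
  calc (1 - θ) * jb j ≤ (1 - θ) * (2 * jb (j + k)) :=
        mul_le_mul_of_nonneg_left h_mid (sub_pos.2 hθ).le
    _ ≤ 4 * jb k := by linarith

theorem summable_jb_rpow_neg {t : ℝ} (ht : d < t) : Summable fun n : Zd d => jb n ^ (-t) := by
  let b := (EuclideanSpace.basisFun (Fin d) ℝ).toBasis
  let bZ := b.restrictScalars ℤ
  have hrank : Module.finrank ℤ (Submodule.span ℤ (Set.range b)) = d := by
    simpa using Module.finrank_eq_card_basis bZ
  have hnorm : ∀ n : Zd d, ‖bZ.equivFun.symm n‖ = znorm n := fun n => by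
    rw [znorm_eq_norm, Submodule.coe_norm]
    congr 1
    ext i
    simp only [Module.Basis.equivFun_symm_apply, Submodule.coe_sum, Submodule.coe_smul, bZ,
      Module.Basis.restrictScalars_apply]
    simp [b, Pi.single_apply]
  have hlattice : Summable fun n : Zd d => znorm n ^ (-t) := by
    simpa only [Function.comp_def, LinearEquiv.coe_toEquiv, hnorm] using
      bZ.equivFun.symm.toEquiv.summable_iff.2 (ZLattice.summable_norm_rpow
        (Submodule.span ℤ (Set.range b)) (-t) (by rw [hrank]; exact neg_lt_neg ht))
  -- The origin is excluded because `0 ^ (-t) = 0` by convention.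
  refine hlattice.of_norm_bounded_eventually ?_
  filter_upwards [Filter.eventually_cofinite_ne 0] with n hn
  have hn_pos : 0 < znorm n := by
    rw [znorm_eq_norm, norm_pos_iff]
    contrapose! hn
    ext i
    simpa using congrArg (· i) hn
  rw [Real.norm_of_nonneg (jb_rpow_pos n _).le]
  exact Real.rpow_le_rpow_of_nonpos hn_pos (znorm_le_jb n) (by linarith [d.cast_nonneg (α := ℝ)])

end JapaneseBracket

section WeightedSequences

/-- The sequence `⟨n⟩^s |c(n)|`, whose `ℓ²` norm is the Sobolev norm `‖c‖_{H^s}`. -/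
def weightedAbs (s : ℝ) (c : Seq d) (n : Zd d) : ℝ := jb n ^ s * ‖c n‖

/-- Membership in the weighted Wiener algebra: `∑_n ⟨n⟩^ρ |c(n)| < ∞`. -/
def InWiener (ρ : ℝ) (c : Seq d) : Prop := Summable (weightedAbs ρ c)

/-- The weighted Wiener norm `∑_n ⟨n⟩^ρ |c(n)|`, equal to `0` by convention if the series
diverges. -/
def wienerNorm (ρ : ℝ) (c : Seq d) : ℝ := ∑' n, weightedAbs ρ c n

theorem weightedAbs_nonneg (s : ℝ) (c : Seq d) : 0 ≤ weightedAbs s c :=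
  fun n => mul_nonneg (jb_rpow_pos n s).le (norm_nonneg _)

theorem weightedAbs_sq (s : ℝ) (c : Seq d) (n : Zd d) :
    weightedAbs s c n ^ 2 = jb n ^ (2 * s) * ‖c n‖ ^ 2 := by
  rw [weightedAbs, mul_pow, mul_comm 2 s, Real.rpow_mul (jb_nonneg n), Real.rpow_two]

theorem inHsSeq_iff {s : ℝ} {c : Seq d} :
    InHsSeq s c ↔ Summable fun n => weightedAbs s c n ^ 2 := by
  simp only [InHsSeq, weightedAbs_sq]

theorem hsNorm_eq (s : ℝ) (c : Seq d) : hsNorm s c = √(∑' n, weightedAbs s c n ^ 2) := by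
  simp only [hsNorm, hsNormSq, weightedAbs_sq]

theorem hsNorm_nonneg (s : ℝ) (c : Seq d) : 0 ≤ hsNorm s c := Real.sqrt_nonneg _

theorem wienerNorm_nonneg (ρ : ℝ) (c : Seq d) : 0 ≤ wienerNorm ρ c :=
  tsum_nonneg (weightedAbs_nonneg ρ c)

theorem hsNorm_le_of_weightedAbs_le {s K : ℝ} {c : Seq d} {g : Zd d → ℝ} (hK : 0 ≤ K)
    (hg : Summable fun n => g n ^ 2) (h : ∀ n, weightedAbs s c n ≤ K * g n) :
    hsNorm s c ≤ K * √(∑' n, g n ^ 2) := by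
  have hsq : ∀ n, weightedAbs s c n ^ 2 ≤ K ^ 2 * g n ^ 2 := fun n => by
    simpa only [mul_pow] using pow_le_pow_left₀ (weightedAbs_nonneg s c n) (h n) 2
  have hKg := hg.mul_left (K ^ 2)
  calc hsNorm s c ≤ √(∑' n, K ^ 2 * g n ^ 2) := by
        rw [hsNorm_eq]
        exact Real.sqrt_le_sqrt
          ((hKg.of_nonneg_of_le (fun _ => sq_nonneg _) hsq).tsum_le_tsum hsq hKg)
    _ = K * √(∑' n, g n ^ 2) := by
        rw [tsum_mul_left, Real.sqrt_mul (sq_nonneg K), Real.sqrt_sq hK]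

theorem InWiener.mono {σ ρ : ℝ} {c : Seq d} (h : InWiener ρ c) (hσρ : σ ≤ ρ) : InWiener σ c :=
  Summable.of_nonneg_of_le (weightedAbs_nonneg σ c)
    (fun n => mul_le_mul_of_nonneg_right (Real.rpow_le_rpow_of_exponent_le (one_le_jb n) hσρ)
      (norm_nonneg _)) h

theorem inWiener_zero_iff {c : Seq d} : InWiener 0 c ↔ Summable fun n => ‖c n‖ :=
  summable_congr fun n => by rw [weightedAbs, Real.rpow_zero, one_mul]

theorem exists_forall_wienerNorm_le {σ : ℝ} (hσ : (d : ℝ) / 2 < σ) (ρ : ℝ) :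
    ∃ Z > 0, ∀ c : Seq d, InHsSeq (ρ + σ) c →
      InWiener ρ c ∧ wienerNorm ρ c ≤ Z * hsNorm (ρ + σ) c := by
  have hZ : Summable fun n : Zd d => (jb n ^ (-σ)) ^ 2 := by
    refine (summable_jb_rpow_neg (t := 2 * σ) (by linarith)).congr fun n => ?_
    rw [← Real.rpow_mul_natCast (jb_nonneg n)]
    congr 1
    push_cast
    ring
  refine ⟨√(∑' n : Zd d, (jb n ^ (-σ)) ^ 2), Real.sqrt_pos.2
    (hZ.tsum_pos (fun n => sq_nonneg _) 0 (pow_pos (jb_rpow_pos 0 _) 2)), fun c hc => ?_⟩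
  have hsplit : weightedAbs ρ c = fun n => jb n ^ (-σ) * weightedAbs (ρ + σ) c n := by
    funext n
    rw [weightedAbs, weightedAbs, ← mul_assoc, ← Real.rpow_add (jb_pos n),
      neg_add_cancel_comm_assoc]
  rw [InWiener, wienerNorm, hsNorm_eq, hsplit]
  exact summable_mul_and_tsum_mul_le_sqrt (fun n => (jb_rpow_pos n _).le)
    (weightedAbs_nonneg _ c) hZ (inHsSeq_iff.1 hc)

end WeightedSequences

section Trilinear

/-- The summand, indexed by `p = (l, k)`, of `trilinear m A B c j`. -/
def trilinearTerm (m : Zd d → Zd d → Zd d → ℝ) (A B c : Seq d) (j : Zd d) (p : Zd d × Zd d) : ℂ :=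
  (m j p.1 p.2 : ℂ) * (A (j - p.1) * B (p.1 - p.2)) * c p.2

/-- The trilinear Fourier multiplier `j ↦ ∑_{l,k} m(j,l,k) A(j-l) B(l-k) c(k)` with symbol `m`,
the common form of `T_a T_b` and `T_{ab}` on Fourier coefficients. -/
def trilinear (m : Zd d → Zd d → Zd d → ℝ) (A B c : Seq d) : Seq d :=
  fun j => ∑' p, trilinearTerm m A B c j p

/-- The symbol estimate under which `trilinear m` is bounded into `H^t` from `H^s`, with two
coefficient sequences in the Wiener algebra of weight `⟨n⟩^ρ`. -/
def HasMultiplierBound (m : Zd d → Zd d → Zd d → ℝ) (t ρ s K : ℝ) : Prop :=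
  ∀ j l k, jb j ^ t * |m j l k| ≤ K * (jb (j - l) ^ ρ * jb (l - k) ^ ρ * jb k ^ s)

variable {m m' : Zd d → Zd d → Zd d → ℝ} {t ρ σ s K N : ℝ} {A B c : Seq d}

theorem trilinear_sub {j : Zd d} (hm : Summable (trilinearTerm m A B c j))
    (hm' : Summable (trilinearTerm m' A B c j)) :
    trilinear (m - m') A B c j = trilinear m A B c j - trilinear m' A B c j := by
  simp only [trilinear, ← hm.tsum_sub hm']
  refine tsum_congr fun p => ?_
  simp only [trilinearTerm, Pi.sub_apply, Complex.ofReal_sub, sub_mul]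

theorem HasMultiplierBound.nonneg (hm : HasMultiplierBound m t ρ s K) : 0 ≤ K := by
  have h_zero := hm 0 0 0
  simp only [sub_zero, jb_zero, Real.one_rpow, mul_one, one_mul] at h_zero
  exact (abs_nonneg _).trans h_zero

theorem HasMultiplierBound.rpow_mul_norm_trilinearTerm_le (hm : HasMultiplierBound m t ρ s K)
    (A B c : Seq d) (j : Zd d) (p : Zd d × Zd d) :
    jb j ^ t * ‖trilinearTerm m A B c j p‖ ≤
      K * (weightedAbs ρ A (j - p.1) * (weightedAbs ρ B (p.1 - p.2) * weightedAbs s c p.2)) :=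
  calc jb j ^ t * ‖trilinearTerm m A B c j p‖
      = jb j ^ t * |m j p.1 p.2| * (‖A (j - p.1)‖ * ‖B (p.1 - p.2)‖ * ‖c p.2‖) := by
        rw [trilinearTerm, norm_mul, norm_mul, norm_mul, Complex.norm_real, Real.norm_eq_abs]
        ring
    _ ≤ K * (jb (j - p.1) ^ ρ * jb (p.1 - p.2) ^ ρ * jb p.2 ^ s) *
          (‖A (j - p.1)‖ * ‖B (p.1 - p.2)‖ * ‖c p.2‖) :=
        mul_le_mul_of_nonneg_right (hm j p.1 p.2) (by positivity)
    _ = K * (weightedAbs ρ A (j - p.1) * (weightedAbs ρ B (p.1 - p.2) * weightedAbs s c p.2)) := by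
        simp only [weightedAbs]
        ring

theorem HasMultiplierBound.summable_trilinearTerm (hm : HasMultiplierBound m t ρ s K)
    (hA : InWiener ρ A) (hB : InWiener ρ B) (hc : InHsSeq s c) (j : Zd d) :
    Summable (trilinearTerm m A B c j) := by
  have hconv := hasSum_conv_conv (weightedAbs_nonneg ρ A) (weightedAbs_nonneg ρ B)
    (weightedAbs_nonneg s c) hA hB (inHsSeq_iff.1 hc) j
  have hweighted : Summable fun p => jb j ^ t * ‖trilinearTerm m A B c j p‖ :=
    .of_nonneg_of_le (fun p => mul_nonneg (jb_rpow_pos j t).le (norm_nonneg _))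
      (hm.rpow_mul_norm_trilinearTerm_le A B c j) (hconv.summable.mul_left K)
  exact ((summable_mul_left_iff (jb_rpow_pos j t).ne').1 hweighted).of_norm

theorem HasMultiplierBound.weightedAbs_trilinear_le (hm : HasMultiplierBound m t ρ s K)
    (hA : InWiener ρ A) (hB : InWiener ρ B) (hc : InHsSeq s c) (j : Zd d) :
    weightedAbs t (trilinear m A B c) j ≤
      K * conv (weightedAbs ρ A) (conv (weightedAbs ρ B) (weightedAbs s c)) j := by
  have hconv := hasSum_conv_conv (weightedAbs_nonneg ρ A) (weightedAbs_nonneg ρ B)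
    (weightedAbs_nonneg s c) hA hB (inHsSeq_iff.1 hc) j
  have hsum := (hm.summable_trilinearTerm hA hB hc j).norm
  calc weightedAbs t (trilinear m A B c) j
      ≤ jb j ^ t * ∑' p, ‖trilinearTerm m A B c j p‖ :=
        mul_le_mul_of_nonneg_left (norm_tsum_le_tsum_norm hsum) (jb_rpow_pos j t).le
    _ = ∑' p, jb j ^ t * ‖trilinearTerm m A B c j p‖ := tsum_mul_left.symm
    _ ≤ ∑' p : Zd d × Zd d, K * (weightedAbs ρ A (j - p.1) *
          (weightedAbs ρ B (p.1 - p.2) * weightedAbs s c p.2)) :=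
        (hsum.mul_left _).tsum_le_tsum (hm.rpow_mul_norm_trilinearTerm_le A B c j)
          (hconv.summable.mul_left K)
    _ = K * conv (weightedAbs ρ A) (conv (weightedAbs ρ B) (weightedAbs s c)) j := by
        rw [tsum_mul_left, hconv.tsum_eq]

theorem HasMultiplierBound.hsNorm_trilinear_le (hm : HasMultiplierBound m t ρ s K)
    (hA : InWiener ρ A) (hB : InWiener ρ B) (hc : InHsSeq s c) :
    hsNorm t (trilinear m A B c) ≤ K * (wienerNorm ρ A * (wienerNorm ρ B * hsNorm s c)) := by
  have hA₀ := weightedAbs_nonneg ρ A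
  have hB₀ := weightedAbs_nonneg ρ B
  have hc₀ := weightedAbs_nonneg s c
  have hc' := inHsSeq_iff.1 hc
  have hBc₀ := conv_nonneg hB₀ hc₀
  have hBc := summable_sq_conv hB₀ hc₀ hB hc'
  rw [hsNorm_eq s]
  calc hsNorm t (trilinear m A B c)
      ≤ K * √(∑' j, conv (weightedAbs ρ A) (conv (weightedAbs ρ B) (weightedAbs s c)) j ^ 2) :=
        hsNorm_le_of_weightedAbs_le hm.nonneg (summable_sq_conv hA₀ hBc₀ hA hBc)
          (hm.weightedAbs_trilinear_le hA hB hc)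
    _ ≤ K * (wienerNorm ρ A * √(∑' j, conv (weightedAbs ρ B) (weightedAbs s c) j ^ 2)) :=
        mul_le_mul_of_nonneg_left (sqrt_tsum_sq_conv_le hA₀ hBc₀ hA hBc) hm.nonneg
    _ ≤ K * (wienerNorm ρ A * (wienerNorm ρ B * √(∑' k, weightedAbs s c k ^ 2))) :=
        mul_le_mul_of_nonneg_left (mul_le_mul_of_nonneg_left
          (sqrt_tsum_sq_conv_le hB₀ hc₀ hB hc') (wienerNorm_nonneg ρ A)) hm.nonneg

theorem HasMultiplierBound.add_exponent (hm : HasMultiplierBound m t σ s K) (hN : 0 ≤ N)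
    (hρ : 0 ≤ ρ) (hsupp : ∀ j l k, m j l k ≠ 0 → jb j ≤ N * (jb (j - l) * jb (l - k))) :
    HasMultiplierBound m (t + ρ) (σ + ρ) s (N ^ ρ * K) := by
  intro j l k
  have rpow_weight : ∀ n : Zd d, jb n ^ (σ + ρ) = jb n ^ σ * jb n ^ ρ := fun n =>
    Real.rpow_add (jb_pos n) σ ρ
  have hle : jb j ^ ρ * (jb j ^ t * |m j l k|) ≤
      (N * (jb (j - l) * jb (l - k))) ^ ρ * (jb j ^ t * |m j l k|) := by
    rcases eq_or_ne (m j l k) 0 with h₀ | h₀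
    · simp only [h₀, abs_zero, mul_zero, le_refl]
    · exact mul_le_mul_of_nonneg_right (Real.rpow_le_rpow (jb_nonneg j) (hsupp j l k h₀) hρ)
        (mul_nonneg (jb_rpow_pos j t).le (abs_nonneg _))
  have hjj := mul_nonneg (jb_nonneg (j - l)) (jb_nonneg (l - k))
  calc jb j ^ (t + ρ) * |m j l k| = jb j ^ ρ * (jb j ^ t * |m j l k|) := by
        rw [Real.rpow_add (jb_pos j)]
        ring
    _ ≤ (N * (jb (j - l) * jb (l - k))) ^ ρ *
          (K * (jb (j - l) ^ σ * jb (l - k) ^ σ * jb k ^ s)) :=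
        hle.trans (mul_le_mul_of_nonneg_left (hm j l k)
          (Real.rpow_nonneg (mul_nonneg hN hjj) ρ))
    _ = N ^ ρ * K * (jb (j - l) ^ (σ + ρ) * jb (l - k) ^ (σ + ρ) * jb k ^ s) := by
        rw [Real.mul_rpow hN hjj, Real.mul_rpow (jb_nonneg _) (jb_nonneg _), rpow_weight,
          rpow_weight]
        ring

end Trilinear

section Comparability

/-- The Japanese brackets of `j` and `k` agree up to the factor `M`. -/
def JbComparable (M : ℝ) (j k : Zd d) : Prop := jb j ≤ M * jb k ∧ jb k ≤ M * jb j

variable {M M' : ℝ} {j l k : Zd d}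

theorem JbComparable.one_le (h : JbComparable M j k) : 1 ≤ M := by
  by_contra! hM
  linarith [h.1, h.2, mul_lt_of_lt_one_left (jb_pos j) hM, mul_lt_of_lt_one_left (jb_pos k) hM]

theorem JbComparable.nonneg (h : JbComparable M j k) : 0 ≤ M := zero_le_one.trans h.one_le

theorem JbComparable.refl (hM : 1 ≤ M) (j : Zd d) : JbComparable M j j :=
  ⟨le_mul_of_one_le_left (jb_nonneg j) hM, le_mul_of_one_le_left (jb_nonneg j) hM⟩

theorem JbComparable.trans (h : JbComparable M j l) (h' : JbComparable M' l k) :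
    JbComparable (M * M') j k := by
  constructor
  · rw [mul_assoc]
    exact h.1.trans (mul_le_mul_of_nonneg_left h'.1 h.nonneg)
  · rw [mul_comm M, mul_assoc]
    exact h'.2.trans (mul_le_mul_of_nonneg_left h.2 h'.nonneg)

theorem JbComparable.rpow_le (h : JbComparable M j k) (s : ℝ) :
    jb j ^ s ≤ M ^ |s| * jb k ^ s := by
  rcases le_total 0 s with hs | hs
  · rw [abs_of_nonneg hs, ← Real.mul_rpow h.nonneg (jb_nonneg k)]
    exact Real.rpow_le_rpow (jb_nonneg j) h.1 hs
  · have hM : 0 < M := one_pos.trans_le h.one_le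
    rw [abs_of_nonpos hs, Real.rpow_neg hM.le, ← div_eq_inv_mul,
      le_div_iff₀' (Real.rpow_pos_of_pos hM s), ← Real.mul_rpow hM.le (jb_nonneg j)]
    exact Real.rpow_le_rpow_of_nonpos (jb_pos k) h.2 hs

theorem jbComparable_of_znorm_sub_le {θ : ℝ} (hθ : θ < 1)
    (h : znorm (j - k) ≤ θ * jb (j + k)) : JbComparable (4 / (1 - θ)) j k := by
  refine ⟨jb_le_mul_jb_of_znorm_sub_le hθ h, jb_le_mul_jb_of_znorm_sub_le hθ ?_⟩
  rwa [znorm_sub_comm, add_comm]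

theorem hasMultiplierBound_of_jbComparable {m : Zd d → Zd d → Zd d → ℝ} {B : ℝ} (hM : 0 ≤ M)
    (hB : ∀ j l k, |m j l k| ≤ B) (hsupp : ∀ j l k, m j l k ≠ 0 → JbComparable M j k) (s : ℝ) :
    HasMultiplierBound m s 0 s (B * M ^ |s|) := by
  intro j l k
  simp only [Real.rpow_zero, one_mul]
  have hB₀ : 0 ≤ B := (abs_nonneg _).trans (hB j l k)
  have hMs : 0 ≤ M ^ |s| * jb k ^ s := mul_nonneg (Real.rpow_nonneg hM _) (jb_rpow_pos k s).le
  rw [mul_assoc, mul_comm]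
  rcases eq_or_ne (m j l k) 0 with h₀ | h₀
  · rw [h₀, abs_zero, zero_mul]
    exact mul_nonneg hB₀ hMs
  · exact mul_le_mul (hB j l k) ((hsupp j l k h₀).rpow_le s) (jb_rpow_pos j s).le hB₀

end Comparability

section CutOff

/-- A real function bounded by `1`, equal to `1` on `[-δ, δ]` and to `0` outside `(-r, r)`: all
that the composition estimate uses of the cut-off `χ`. -/
structure IsPlateau (δ r : ℝ) (χ : ℝ → ℝ) : Prop where
  abs_le_one : ∀ t, |χ t| ≤ 1
  eq_one : ∀ t, |t| ≤ δ → χ t = 1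
  eq_zero : ∀ t, r ≤ |t| → χ t = 0

/-- The trilinear symbol `ψ(j,l) ψ(l,k)` of the composition `T_a T_b`, with `ψ` the cut-off
factor. -/
def compMultiplier (χ : ℝ → ℝ) (ε : ℝ) (j l k : Zd d) : ℝ := cutFactor χ ε j l * cutFactor χ ε l k

/-- The trilinear symbol `ψ(j,k)` of `T_{ab}`, with `ψ` the cut-off factor; the intermediate
frequency does not enter. -/
def prodMultiplier (χ : ℝ → ℝ) (ε : ℝ) (j _l k : Zd d) : ℝ := cutFactor χ ε j k

variable {χ : ℝ → ℝ} {δ r ε : ℝ} {j l k p q : Zd d}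

theorem IsCutoff.isPlateau (hχ : IsCutoff χ) : IsPlateau (5 / 4) (8 / 5) χ where
  abs_le_one t := by rw [abs_of_nonneg (hχ.mem t).1]; exact (hχ.mem t).2
  eq_one := hχ.eq_one
  eq_zero := hχ.eq_zero

theorem abs_znorm_sub_div (hε : 0 < ε) (j k : Zd d) :
    |znorm (j - k) / (ε * jb (j + k))| = znorm (j - k) / (ε * jb (j + k)) :=
  abs_of_nonneg (div_nonneg (znorm_nonneg _) (mul_pos hε (jb_pos _)).le)

theorem IsPlateau.jbComparable_of_cutFactor_ne_zero (hχ : IsPlateau δ r χ) (hε₀ : 0 < ε)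
    (hε₁ : ε * r < 1) (h : cutFactor χ ε j k ≠ 0) : JbComparable (4 / (1 - ε * r)) j k := by
  refine jbComparable_of_znorm_sub_le hε₁ ?_
  contrapose! h
  refine hχ.eq_zero _ ?_
  rw [abs_znorm_sub_div hε₀, le_div_iff₀ (mul_pos hε₀ (jb_pos _))]
  linarith

theorem IsPlateau.jb_add_le_of_cutFactor_ne_one (hχ : IsPlateau δ r χ) (hδ : 0 < δ) (hε : 0 < ε)
    (h : cutFactor χ ε j k ≠ 1) : jb (j + k) ≤ (δ * ε)⁻¹ * znorm (j - k) := by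
  rw [← div_eq_inv_mul, le_div_iff₀' (mul_pos hδ hε)]
  contrapose! h
  refine hχ.eq_one _ ?_
  rw [abs_znorm_sub_div hε, div_le_iff₀ (mul_pos hε (jb_pos _))]
  linarith

theorem IsPlateau.jb_le_of_cutFactor_ne_one (hχ : IsPlateau δ r χ) (hδ : 0 < δ) (hε : 0 < ε)
    {D : ℝ} (h : cutFactor χ ε p q ≠ 1) (hp : znorm (j - p) ≤ D) (hq : znorm (j - q) ≤ D)
    (hpq : znorm (p - q) ≤ D) : jb j ≤ (2 + (δ * ε)⁻¹) * D :=
  calc jb j ≤ jb (j + j) := jb_le_jb_add_self j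
    _ ≤ jb (p + q) + znorm (j + j - (p + q)) := jb_le_jb_add_znorm_sub _ _
    _ ≤ jb (p + q) + (znorm (j - p) + znorm (j - q)) := by
        rw [add_sub_add_comm]
        gcongr
        exact znorm_add_le _ _
    _ ≤ (δ * ε)⁻¹ * D + (D + D) := by
        have := hχ.jb_add_le_of_cutFactor_ne_one hδ hε h
        gcongr
        exact this.trans (mul_le_mul_of_nonneg_left hpq (inv_pos.2 (mul_pos hδ hε)).le)
    _ = (2 + (δ * ε)⁻¹) * D := by ring

theorem IsPlateau.jb_le_of_compMultiplier_ne (hχ : IsPlateau δ r χ) (hδ : 0 < δ) (hε : 0 < ε)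
    (h : compMultiplier χ ε j l k ≠ prodMultiplier χ ε j l k) :
    jb j ≤ 2 * (2 + (δ * ε)⁻¹) * (jb (j - l) * jb (l - k)) := by
  set D := znorm (j - l) + znorm (l - k)
  have h_jj : znorm (j - j) ≤ D := by
    rw [sub_self, znorm_zero]
    exact add_nonneg (znorm_nonneg _) (znorm_nonneg _)
  have h_jl : znorm (j - l) ≤ D := le_add_of_nonneg_right (znorm_nonneg _)
  have h_lk : znorm (l - k) ≤ D := le_add_of_nonneg_left (znorm_nonneg _)
  have h_jk : znorm (j - k) ≤ D := by
    simpa only [sub_add_sub_cancel] using znorm_add_le (j - l) (l - k)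
  have hD_le : D ≤ 2 * (jb (j - l) * jb (l - k)) := by
    nlinarith [znorm_le_jb (j - l), znorm_le_jb (l - k), one_le_jb (j - l), one_le_jb (l - k)]
  have hne : cutFactor χ ε j l ≠ 1 ∨ cutFactor χ ε l k ≠ 1 ∨ cutFactor χ ε j k ≠ 1 := by
    contrapose! h
    rw [compMultiplier, prodMultiplier, h.1, h.2.1, h.2.2, mul_one]
  have hj : jb j ≤ (2 + (δ * ε)⁻¹) * D := by
    rcases hne with h' | h' | h'
    · exact hχ.jb_le_of_cutFactor_ne_one hδ hε h' h_jj h_jl h_jl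
    · exact hχ.jb_le_of_cutFactor_ne_one hδ hε h' h_jl h_jk h_lk
    · exact hχ.jb_le_of_cutFactor_ne_one hδ hε h' h_jj h_jk h_jk
  calc jb j ≤ (2 + (δ * ε)⁻¹) * (2 * (jb (j - l) * jb (l - k))) :=
        hj.trans (mul_le_mul_of_nonneg_left hD_le (by positivity))
    _ = 2 * (2 + (δ * ε)⁻¹) * (jb (j - l) * jb (l - k)) := by ring

theorem IsPlateau.abs_compMultiplier_le_one (hχ : IsPlateau δ r χ) (ε : ℝ) (j l k : Zd d) :
    |compMultiplier χ ε j l k| ≤ 1 := by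
  rw [compMultiplier, abs_mul]
  exact mul_le_one₀ (hχ.abs_le_one _) (abs_nonneg _) (hχ.abs_le_one _)

theorem IsPlateau.abs_prodMultiplier_le_one (hχ : IsPlateau δ r χ) (ε : ℝ) (j l k : Zd d) :
    |prodMultiplier χ ε j l k| ≤ 1 := hχ.abs_le_one _

theorem IsPlateau.jbComparable_of_compMultiplier_ne_zero (hχ : IsPlateau δ r χ) (hε₀ : 0 < ε)
    (hε₁ : ε * r < 1) (h : compMultiplier χ ε j l k ≠ 0) :
    JbComparable (4 / (1 - ε * r) * (4 / (1 - ε * r))) j k :=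
  (hχ.jbComparable_of_cutFactor_ne_zero hε₀ hε₁ (left_ne_zero_of_mul h)).trans
    (hχ.jbComparable_of_cutFactor_ne_zero hε₀ hε₁ (right_ne_zero_of_mul h))

theorem IsPlateau.jbComparable_of_prodMultiplier_ne_zero (hχ : IsPlateau δ r χ) (hε₀ : 0 < ε)
    (hε₁ : ε * r < 1) (h : prodMultiplier χ ε j l k ≠ 0) :
    JbComparable (4 / (1 - ε * r) * (4 / (1 - ε * r))) j k :=
  have hjk := hχ.jbComparable_of_cutFactor_ne_zero hε₀ hε₁ h
  hjk.trans (.refl hjk.one_le k)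

theorem IsPlateau.exists_hasMultiplierBound_compMultiplier (hχ : IsPlateau δ r χ) (hε₀ : 0 < ε)
    (hε₁ : ε * r < 1) (s : ℝ) :
    ∃ K, HasMultiplierBound (d := d) (compMultiplier χ ε) s 0 s K :=
  ⟨_, hasMultiplierBound_of_jbComparable (mul_self_nonneg _) (hχ.abs_compMultiplier_le_one ε)
    (fun _ _ _ => hχ.jbComparable_of_compMultiplier_ne_zero hε₀ hε₁) s⟩

theorem IsPlateau.exists_hasMultiplierBound_prodMultiplier (hχ : IsPlateau δ r χ) (hε₀ : 0 < ε)
    (hε₁ : ε * r < 1) (s : ℝ) :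
    ∃ K, HasMultiplierBound (d := d) (prodMultiplier χ ε) s 0 s K :=
  ⟨_, hasMultiplierBound_of_jbComparable (mul_self_nonneg _) (hχ.abs_prodMultiplier_le_one ε)
    (fun _ _ _ => hχ.jbComparable_of_prodMultiplier_ne_zero hε₀ hε₁) s⟩

theorem IsPlateau.exists_hasMultiplierBound_sub (hχ : IsPlateau δ r χ) (hδ : 0 < δ) (hε₀ : 0 < ε)
    (hε₁ : ε * r < 1) {ρ : ℝ} (hρ : 0 ≤ ρ) (s : ℝ) :
    ∃ K > 0,
      HasMultiplierBound (d := d) (compMultiplier χ ε - prodMultiplier χ ε) (s + ρ) ρ s K := by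
  have hbounded : ∀ j l k : Zd d, |compMultiplier χ ε j l k - prodMultiplier χ ε j l k| ≤ 2 :=
    fun j l k => (abs_sub _ _).trans ((add_le_add (hχ.abs_compMultiplier_le_one ε j l k)
      (hχ.abs_prodMultiplier_le_one ε j l k)).trans_eq one_add_one_eq_two)
  have hcomparable : ∀ j l k : Zd d, compMultiplier χ ε j l k - prodMultiplier χ ε j l k ≠ 0 →
      JbComparable (4 / (1 - ε * r) * (4 / (1 - ε * r))) j k := fun j l k h => by
    by_cases hcomp : compMultiplier χ ε j l k = 0
    · refine hχ.jbComparable_of_prodMultiplier_ne_zero (l := l) hε₀ hε₁ fun hprod => h ?_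
      rw [hcomp, hprod, sub_zero]
    · exact hχ.jbComparable_of_compMultiplier_ne_zero hε₀ hε₁ hcomp
  have hbound := (hasMultiplierBound_of_jbComparable
    (m := compMultiplier χ ε - prodMultiplier χ ε) (mul_self_nonneg _) hbounded hcomparable
    s).add_exponent (N := 2 * (2 + (δ * ε)⁻¹)) (by positivity) hρ
      fun j l k h => hχ.jb_le_of_compMultiplier_ne hδ hε₀ (sub_ne_zero.1 h)
  rw [zero_add] at hbound
  have : 0 < 4 / (1 - ε * r) := div_pos four_pos (sub_pos.2 hε₁)
  exact ⟨_, by positivity, hbound⟩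

end CutOff

section FourierSeries

/-- The normalising constant `(2π)^{-d/2}` of the Fourier coefficients. -/
abbrev fourierConst (d : ℕ) : ℂ := (((2 * π : ℝ) ^ (-(d : ℝ) / 2) : ℝ) : ℂ)

/-- The character `x ↦ e^{i n·x}`. -/
def expChar (n : Zd d) (x : Vec d) : ℂ := Complex.exp (Complex.I * ((∑ i, (n i : ℝ) * x i : ℝ) : ℂ))

/-- `u` is everywhere the sum of its Fourier series; this is the last clause of `InHs`. -/
def HasFourierSeries (u : Fn d) : Prop :=
  ∀ x, HasSum (fun n => fourierConst d * fCoeff u n * expChar n x) (u x)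

theorem InHs.hasFourierSeries {s : ℝ} {u : Fn d} (hu : InHs s u) : HasFourierSeries u := hu.2.2

theorem fourierConst_ne_zero (d : ℕ) : fourierConst d ≠ 0 :=
  Complex.ofReal_ne_zero.2 (Real.rpow_pos_of_pos Real.two_pi_pos _).ne'

theorem norm_expChar (n : Zd d) (x : Vec d) : ‖expChar n x‖ = 1 := by
  rw [expChar, mul_comm, Complex.norm_exp_ofReal_mul_I]

theorem continuous_expChar (n : Zd d) : Continuous (expChar n) := by
  unfold expChar
  fun_prop

theorem expChar_add (m n : Zd d) (x : Vec d) : expChar (m + n) x = expChar m x * expChar n x := by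
  simp only [expChar, ← Complex.exp_add, ← mul_add, ← Complex.ofReal_add, ← Finset.sum_add_distrib,
    Pi.add_apply, Int.cast_add, add_mul]

theorem fCoeff_eq (u : Fn d) (n : Zd d) :
    fCoeff u n = fourierConst d * ∫ x in box d, u x * expChar (-n) x := by
  simp only [fCoeff, expChar, Pi.neg_apply, Int.cast_neg, neg_mul, Finset.sum_neg_distrib,
    Complex.ofReal_neg, mul_neg]

theorem HasFourierSeries.continuous {u : Fn d} (hu : HasFourierSeries u)
    (hsum : Summable fun n => ‖fCoeff u n‖) : Continuous u := by
  rw [show u = fun x => ∑' n, fourierConst d * fCoeff u n * expChar n x from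
    funext fun x => (hu x).tsum_eq.symm]
  refine continuous_tsum (fun n => continuous_const.mul (continuous_expChar n))
    (hsum.mul_left ‖fourierConst d‖) fun n x => ?_
  rw [norm_mul, norm_mul, norm_expChar, mul_one]

theorem integrableOn_box_of_continuous {u : Fn d} (hu : Continuous u) : IntegrableOn u (box d) :=
  (hu.continuousOn.integrableOn_compact (isCompact_univ_pi fun _ => isCompact_Icc)).mono_set
    (Set.pi_mono fun _ _ => Set.Ioc_subset_Icc_self)

theorem hasSum_fCoeff_mul {a b : Fn d} (ha : IntegrableOn a (box d)) (hb : HasFourierSeries b)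
    (hsum : Summable fun n => ‖fCoeff b n‖) (n : Zd d) :
    HasSum (fun l => fourierConst d * (fCoeff a (n - l) * fCoeff b l))
      (fCoeff (fun x => a x * b x) n) := by
  let F : Zd d → Vec d → ℂ := fun l x =>
    fourierConst d * fCoeff b l * (a x * expChar (-(n - l)) x)
  have hF_sum : ∀ x, HasSum (fun l => F l x) (a x * b x * expChar (-n) x) := fun x => by
    refine (((hb x).mul_left (a x)).mul_right (expChar (-n) x)).congr_fun fun l => ?_
    simp only [F, show -(n - l) = l + -n by abel, expChar_add]
    ring
  have hF_int : ∀ l, Integrable (F l) (volume.restrict (box d)) := fun l =>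
    (ha.mul_bdd (c := 1) (continuous_expChar _).aestronglyMeasurable
      (.of_forall fun x => (norm_expChar _ x).le)).const_mul _
  have hF_norm : ∀ l x, ‖F l x‖ = ‖fourierConst d‖ * ‖fCoeff b l‖ * ‖a x‖ := fun l x => by
    simp only [F, norm_mul, norm_expChar, mul_one]
  have hF_norm_sum : Summable fun l => ∫ x in box d, ‖F l x‖ := by
    simp only [hF_norm, integral_const_mul]
    exact (hsum.mul_left _).mul_right _
  have hF_integral : ∀ l, ∫ x in box d, F l x = fCoeff a (n - l) * fCoeff b l := fun l => by
    simp only [F, integral_const_mul]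
    rw [fCoeff_eq a]
    ring
  have hF := hasSum_integral_of_summable_integral_norm hF_int hF_norm_sum
  simp only [hF_integral, (hF_sum _).tsum_eq] at hF
  rw [fCoeff_eq]
  exact hF.mul_left _

end FourierSeries

section Paradifferential

variable {χ : ℝ → ℝ} {ε : ℝ} {a b : Fn d} {c : Seq d}

theorem hsNorm_const_mul (s : ℝ) (κ : ℂ) (c : Seq d) :
    hsNorm s (fun j => κ * c j) = ‖κ‖ * hsNorm s c := by
  simp only [hsNorm_eq, weightedAbs, norm_mul, mul_left_comm _ ‖κ‖, mul_pow ‖κ‖, tsum_mul_left]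
  rw [Real.sqrt_mul (sq_nonneg _), Real.sqrt_sq (norm_nonneg κ)]

theorem paraC_paraC_eq {j : Zd d}
    (h : Summable (trilinearTerm (compMultiplier χ ε) (fCoeff a) (fCoeff b) c j)) :
    paraC χ ε (fun x _ => a x) (paraC χ ε (fun x _ => b x) c) j =
      fourierConst d ^ 2 * trilinear (compMultiplier χ ε) (fCoeff a) (fCoeff b) c j := by
  rw [trilinear, h.tsum_prod, sq, mul_assoc, ← tsum_mul_left]
  refine congrArg _ (tsum_congr fun l => ?_)
  rw [paraC, mul_left_comm, ← tsum_mul_left]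
  refine congrArg _ (tsum_congr fun k => ?_)
  simp only [symCoeff, trilinearTerm, compMultiplier, Complex.ofReal_mul]
  ring

theorem paraC_mul_eq {j : Zd d} (ha : IntegrableOn a (box d)) (hb : HasFourierSeries b)
    (hsum : Summable fun n => ‖fCoeff b n‖)
    (h : Summable (trilinearTerm (prodMultiplier χ ε) (fCoeff a) (fCoeff b) c j)) :
    paraC χ ε (fun x _ => a x * b x) c j =
      fourierConst d ^ 2 * trilinear (prodMultiplier χ ε) (fCoeff a) (fCoeff b) c j := by
  have coeff_mul : ∀ k, fCoeff (fun x => a x * b x) (j - k) =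
      fourierConst d * ∑' l, fCoeff a (j - l) * fCoeff b (l - k) := fun k => by
    rw [← tsum_mul_left, ← (hasSum_fCoeff_mul ha hb hsum (j - k)).tsum_eq,
      ← (Equiv.subRight k).tsum_eq]
    simp only [Equiv.subRight_apply, sub_sub_sub_cancel_right]
  have swap_sums : trilinear (prodMultiplier χ ε) (fCoeff a) (fCoeff b) c j =
      ∑' (k) (l), trilinearTerm (prodMultiplier χ ε) (fCoeff a) (fCoeff b) c j (l, k) := by
    rw [trilinear, h.tsum_prod]
    exact Summable.tsum_comm (f := fun k l => trilinearTerm _ _ _ _ _ (l, k)) h.prod_symm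
  rw [swap_sums, sq, mul_assoc, ← tsum_mul_left]
  refine congrArg _ (tsum_congr fun k => ?_)
  simp only [trilinearTerm, prodMultiplier, tsum_mul_left, tsum_mul_right, symCoeff, coeff_mul]
  ring

theorem IsPlateau.exists_hsNorm_paraC_paraC_sub_le {δ r : ℝ} (hχ : IsPlateau δ r χ) (hδ : 0 < δ)
    (hε₀ : 0 < ε) (hε₁ : ε * r < 1) {ρ : ℝ} (hρ : 0 ≤ ρ) (s : ℝ) :
    ∃ K > 0, ∀ (a b : Fn d) (c : Seq d), HasFourierSeries a → HasFourierSeries b →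
      InWiener ρ (fCoeff a) → InWiener ρ (fCoeff b) → InHsSeq s c →
      hsNorm (s + ρ) (fun j => paraC χ ε (fun x _ => a x) (paraC χ ε (fun x _ => b x) c) j
          - paraC χ ε (fun x _ => a x * b x) c j) ≤
        K * (wienerNorm ρ (fCoeff a) * (wienerNorm ρ (fCoeff b) * hsNorm s c)) := by
  obtain ⟨_, hcomp⟩ := hχ.exists_hasMultiplierBound_compMultiplier (d := d) hε₀ hε₁ s
  obtain ⟨_, hprod⟩ := hχ.exists_hasMultiplierBound_prodMultiplier (d := d) hε₀ hε₁ s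
  obtain ⟨K, hK, hsub⟩ := hχ.exists_hasMultiplierBound_sub (d := d) hδ hε₀ hε₁ hρ s
  have hκ : 0 < ‖fourierConst d ^ 2‖ := norm_pos_iff.2 (pow_ne_zero 2 (fourierConst_ne_zero d))
  refine ⟨‖fourierConst d ^ 2‖ * K, mul_pos hκ hK, fun a b c ha hb haρ hbρ hc => ?_⟩
  have ha₀ := haρ.mono hρ
  have hb₀ := hbρ.mono hρ
  have ha_int := integrableOn_box_of_continuous (ha.continuous (inWiener_zero_iff.1 ha₀))
  have hcomp_sum := hcomp.summable_trilinearTerm ha₀ hb₀ hc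
  have hprod_sum := hprod.summable_trilinearTerm ha₀ hb₀ hc
  have hdiff : ∀ j, paraC χ ε (fun x _ => a x) (paraC χ ε (fun x _ => b x) c) j
      - paraC χ ε (fun x _ => a x * b x) c j = fourierConst d ^ 2 *
        trilinear (compMultiplier χ ε - prodMultiplier χ ε) (fCoeff a) (fCoeff b) c j :=
    fun j => by
      rw [paraC_paraC_eq (hcomp_sum j), paraC_mul_eq ha_int hb (inWiener_zero_iff.1 hb₀)
        (hprod_sum j), ← mul_sub, trilinear_sub (hcomp_sum j) (hprod_sum j)]
  simp only [hdiff]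
  rw [hsNorm_const_mul, mul_assoc]
  exact mul_le_mul_of_nonneg_left (hsub.hsNorm_trilinear_le haρ hbρ hc) (norm_nonneg _)

end Paradifferential

theorem statement_6_general (d : ℕ) (s₀ : ℝ) (hs₀ : (d : ℝ) / 2 < s₀) (ρ : ℝ) (hρ : 0 ≤ ρ)
    (χ : ℝ → ℝ) (δ r : ℝ) (hδ : 0 < δ) (hχ : IsPlateau δ r χ) (ε : ℝ) (hε₀ : 0 < ε)
    (hε₁ : ε * r < 1) (s : ℝ) :
    ∃ C > (0 : ℝ), ∀ (a b : Fn d) (c : Seq d),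
      InHs (ρ + s₀) a → InHs (ρ + s₀) b → InHsSeq s c →
      hsNorm (s + ρ)
          (fun j => paraC χ ε (fun x _ => a x) (paraC χ ε (fun x _ => b x) c) j
            - paraC χ ε (fun x _ => a x * b x) c j)
        ≤ C * sobNorm (ρ + s₀) a * sobNorm (ρ + s₀) b * hsNorm s c := by
  obtain ⟨K, hK, hpara⟩ := hχ.exists_hsNorm_paraC_paraC_sub_le (d := d) hδ hε₀ hε₁ hρ s
  obtain ⟨Z, hZ, hwiener⟩ := exists_forall_wienerNorm_le hs₀ ρ
  refine ⟨K * Z ^ 2, by positivity, fun a b c ha hb hc => ?_⟩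
  obtain ⟨haρ, ha_le⟩ := hwiener (fCoeff a) ha.2.1
  obtain ⟨hbρ, hb_le⟩ := hwiener (fCoeff b) hb.2.1
  have ha₀ := (wienerNorm_nonneg ρ (fCoeff a)).trans ha_le
  have hb₀ := wienerNorm_nonneg ρ (fCoeff b)
  have hc₀ := hsNorm_nonneg s c
  calc hsNorm (s + ρ) (fun j => paraC χ ε (fun x _ => a x) (paraC χ ε (fun x _ => b x) c) j
          - paraC χ ε (fun x _ => a x * b x) c j)
      ≤ K * (wienerNorm ρ (fCoeff a) * (wienerNorm ρ (fCoeff b) * hsNorm s c)) :=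
        hpara a b c ha.hasFourierSeries hb.hasFourierSeries haρ hbρ hc
    _ ≤ K * (Z * sobNorm (ρ + s₀) a * (Z * sobNorm (ρ + s₀) b * hsNorm s c)) := by
        unfold sobNorm
        gcongr
    _ = K * Z ^ 2 * sobNorm (ρ + s₀) a * sobNorm (ρ + s₀) b * hsNorm s c := by ring

/-- Proposition 2.5(i), eq. (2.24): if `a, b ∈ H^{ρ+s₀}(𝕋^d;ℂ)` are
functions (ξ-independent symbols), then
`‖(T_a T_b - T_{ab})h‖_{H^{s+ρ}} ≤ C ‖a‖_{H^{ρ+s₀}} ‖b‖_{H^{ρ+s₀}} ‖h‖_{H^s}`. -/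
theorem statement_6 (d : ℕ) (hd : 1 ≤ d) (s₀ : ℕ) (hs₀ : d < s₀) (ρ : ℝ) (hρ : 0 ≤ ρ)
    (χ : ℝ → ℝ) (hχ : IsCutoff χ) (ε : ℝ) (hε₀ : 0 < ε) (hε₁ : ε < 1 / 4) (s : ℝ) :
    ∃ C > (0 : ℝ), ∀ (a b : Fn d) (c : Seq d),
      InHs (ρ + s₀) a → InHs (ρ + s₀) b → InHsSeq s c →
      hsNorm (s + ρ)
          (fun j => paraC χ ε (fun x _ => a x) (paraC χ ε (fun x _ => b x) c) j
            - paraC χ ε (fun x _ => a x * b x) c j)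
        ≤ C * sobNorm (ρ + s₀) a * sobNorm (ρ + s₀) b * hsNorm s c := by
  have hs₀' : (d : ℝ) < s₀ := Nat.cast_lt.2 hs₀
  exact statement_6_general d s₀ (by linarith [d.cast_nonneg (α := ℝ)]) ρ hρ χ (5 / 4) (8 / 5)
    (by norm_num) hχ.isPlateau ε hε₀ (by linarith) s

end QLNLS
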